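/- arXiv:1702.01192 — 3 statements merged into one kernel-verified Lean document; each statement's English description precedes it below -/
import Mathlib

section
/- Let r>0, let m_1 ≠ m_2 be integers ≥1, and let α>0, β>0 satisfy both β = -c_{m_1}·α - c_{m_1}^2 and β = -c_{m_2}·α - c_{m_2}^2, where c_m = -(π/r)^2·((2m-1)/4)^2. Then the functions e_{m_1}(s) = 2·cos(ω_{m_1}(s+r)) and e_{m_2}(s) = 2·cos(ω_{m_2}(s+r)), with ω_m = ((2m-1)π)/(4r), are linearly independent, and every four times continuously differentiable function x on [-r,r] satisfying x'''' + α·x'' + β·x = 0 on [-r,r], x'(-r) = x'''(-r) = 0 and x(r) = x''(r) = 0 is a linear combination of e_{m_1} and e_{m_2}. In particular the solution space of the linear boundary value problem is two-dimensional. -/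
open Real Set

/-!
On a ray the quadratic `z² - α z + β` has the root `ω²`, so at an intersection of two rays the
operator `D⁴ + α D² + β` factors as `(D² + ω₁²)(D² + ω₂²)`. For a solution `x` on `[a, b]`, both
`x'' + ω₂² x` and `x'' + ω₁² x` therefore solve harmonic oscillator equations, with zero slope at
`a` because `x'(a) = x'''(a) = 0`. Hence they are multiples of `cos (ω₁ (s - a))` and
`cos (ω₂ (s - a))`, and their difference is `(ω₂² - ω₁²) x`. The two cosines are independent since
they agree at `a` but not at every nearby point.
-/

section Oscillator

variable {E : Type*} [NormedAddCommGroup E] [NormedSpace ℝ E] {a b s : ℝ}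

theorem hasDerivAt_cos_mul_sub (ω a s : ℝ) :
    HasDerivAt (fun t => cos (ω * (t - a))) (-ω * sin (ω * (s - a))) s := by
  convert (((hasDerivAt_id' s).sub_const a).const_mul ω).cos using 1
  ring

theorem hasDerivAt_sin_mul_sub (ω a s : ℝ) :
    HasDerivAt (fun t => sin (ω * (t - a))) (ω * cos (ω * (s - a))) s := by
  convert (((hasDerivAt_id' s).sub_const a).const_mul ω).sin using 1
  ring

theorem eqOn_of_second_order_linear_ode {A : E →L[ℝ] E} {y y' z z' : ℝ → E}
    (hy : ∀ t ∈ Icc a b, HasDerivWithinAt y (y' t) (Icc a b) t)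
    (hy' : ∀ t ∈ Icc a b, HasDerivWithinAt y' (A (y t)) (Icc a b) t)
    (hz : ∀ t ∈ Icc a b, HasDerivWithinAt z (z' t) (Icc a b) t)
    (hz' : ∀ t ∈ Icc a b, HasDerivWithinAt z' (A (z t)) (Icc a b) t)
    (h₀ : y a = z a) (h₀' : y' a = z' a) : EqOn y z (Icc a b) := by
  let V : E × E →L[ℝ] E × E :=
    (ContinuousLinearMap.snd ℝ E E).prod (A ∘L ContinuousLinearMap.fst ℝ E E)
  have pair_solves {u u' : ℝ → E} (hu : ∀ t ∈ Icc a b, HasDerivWithinAt u (u' t) (Icc a b) t)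
      (hu' : ∀ t ∈ Icc a b, HasDerivWithinAt u' (A (u t)) (Icc a b) t) :
      ∀ t ∈ Icc a b, HasDerivWithinAt (fun t => (u t, u' t)) (V (u t, u' t)) (Icc a b) t :=
    fun t ht => (hu t ht).prodMk (hu' t ht)
  have pairs_eq : EqOn (fun t => (y t, y' t)) (fun t => (z t, z' t)) (Icc a b) :=
    ODE_solution_unique (fun _ => V.lipschitz)
      (HasDerivWithinAt.continuousOn (pair_solves hy hy'))
      (fun t ht => (pair_solves hy hy' t (Ico_subset_Icc_self ht)).mono_of_mem_nhdsWithin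
        (Icc_mem_nhdsGE_of_mem ht))
      (HasDerivWithinAt.continuousOn (pair_solves hz hz'))
      (fun t ht => (pair_solves hz hz' t (Ico_subset_Icc_self ht)).mono_of_mem_nhdsWithin
        (Icc_mem_nhdsGE_of_mem ht))
      (Prod.ext h₀ h₀')
  exact fun t ht => congrArg Prod.fst (pairs_eq ht)

theorem eq_cos_smul_of_oscillator {ω : ℝ} {y y' : ℝ → E}
    (hy : ∀ t ∈ Icc a b, HasDerivWithinAt y (y' t) (Icc a b) t)
    (hy' : ∀ t ∈ Icc a b, HasDerivWithinAt y' (-ω ^ 2 • y t) (Icc a b) t)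
    (h₀ : y' a = 0) (hs : s ∈ Icc a b) : y s = cos (ω * (s - a)) • y a := by
  have hz (t : ℝ) : HasDerivAt (fun t => cos (ω * (t - a)) • y a)
      ((-ω * sin (ω * (t - a))) • y a) t :=
    (hasDerivAt_cos_mul_sub ω a t).smul_const (y a)
  have hz' (t : ℝ) : HasDerivAt (fun t => (-ω * sin (ω * (t - a))) • y a)
      (-ω ^ 2 • cos (ω * (t - a)) • y a) t := by
    convert ((hasDerivAt_sin_mul_sub ω a t).const_mul (-ω)).smul_const (y a) using 1
    module
  exact eqOn_of_second_order_linear_ode (A := -ω ^ 2 • ContinuousLinearMap.id ℝ E) hy hy'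
    (fun t _ => (hz t).hasDerivWithinAt) (fun t _ => (hz' t).hasDerivWithinAt)
    (by simp) (by simp [h₀]) hs

end Oscillator

theorem hasDerivAt_iteratedDeriv_of_contDiff {𝕜 F : Type*} [NontriviallyNormedField 𝕜]
    [NormedAddCommGroup F] [NormedSpace 𝕜 F] {n : WithTop ℕ∞} {f : 𝕜 → F} (hf : ContDiff 𝕜 n f)
    {k : ℕ} (hk : k < n) (t : 𝕜) :
    HasDerivAt (iteratedDeriv k f) (iteratedDeriv (k + 1) f t) t := by
  rw [iteratedDeriv_succ]
  exact (hf.differentiable_iteratedDeriv k hk t).hasDerivAt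

section FourthOrder

variable {E : Type*} [NormedAddCommGroup E] [NormedSpace ℝ E] {a b s ω₁ ω₂ : ℝ} {x : ℝ → E}

theorem iteratedDeriv_two_add_sq_smul_eq_cos_smul (hx : ContDiff ℝ 4 x)
    (hode : ∀ t ∈ Icc a b, iteratedDeriv 4 x t + (ω₁ ^ 2 + ω₂ ^ 2) • iteratedDeriv 2 x t
      + (ω₁ ^ 2 * ω₂ ^ 2) • x t = 0)
    (h₁ : iteratedDeriv 1 x a = 0) (h₃ : iteratedDeriv 3 x a = 0) (hs : s ∈ Icc a b) :
    iteratedDeriv 2 x s + ω₂ ^ 2 • x s =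
      cos (ω₁ * (s - a)) • (iteratedDeriv 2 x a + ω₂ ^ 2 • x a) := by
  let y (k : ℕ) (t : ℝ) : E := iteratedDeriv (k + 2) x t + ω₂ ^ 2 • iteratedDeriv k x t
  have hy {k : ℕ} (hk : k + 2 < 4) (t : ℝ) : HasDerivAt (y k) (y (k + 1) t) t := by
    have hD {j : ℕ} (hj : j < 4) :=
      hasDerivAt_iteratedDeriv_of_contDiff hx (k := j) (mod_cast hj) t
    exact (hD hk).add ((hD (by lia)).const_smul (ω₂ ^ 2))
  have y_oscillates : ∀ t ∈ Icc a b, y 2 t = -ω₁ ^ 2 • y 0 t := fun t ht => by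
    simp only [y, iteratedDeriv_zero, zero_add, Nat.reduceAdd]
    linear_combination (norm := module) hode t ht
  have y_slope : y 1 a = 0 := by simp only [y, Nat.reduceAdd, h₁, h₃, smul_zero, add_zero]
  simpa only [y, iteratedDeriv_zero, zero_add] using
    eq_cos_smul_of_oscillator (fun t _ => (hy (by lia) t).hasDerivWithinAt)
      (fun t ht => y_oscillates t ht ▸ (hy (by lia) t).hasDerivWithinAt) y_slope hs

theorem exists_eq_cos_smul_add_cos_smul (hω : ω₁ ^ 2 ≠ ω₂ ^ 2) (hx : ContDiff ℝ 4 x)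
    (hode : ∀ t ∈ Icc a b, iteratedDeriv 4 x t + (ω₁ ^ 2 + ω₂ ^ 2) • iteratedDeriv 2 x t
      + (ω₁ ^ 2 * ω₂ ^ 2) • x t = 0)
    (h₁ : iteratedDeriv 1 x a = 0) (h₃ : iteratedDeriv 3 x a = 0) :
    ∃ u v : E, ∀ s ∈ Icc a b, x s = cos (ω₁ * (s - a)) • u + cos (ω₂ * (s - a)) • v := by
  have hδ : ω₂ ^ 2 - ω₁ ^ 2 ≠ 0 := sub_ne_zero.mpr hω.symm
  refine ⟨(ω₂ ^ 2 - ω₁ ^ 2)⁻¹ • (iteratedDeriv 2 x a + ω₂ ^ 2 • x a),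
    -(ω₂ ^ 2 - ω₁ ^ 2)⁻¹ • (iteratedDeriv 2 x a + ω₁ ^ 2 • x a), fun s hs => ?_⟩
  have hy₁ := iteratedDeriv_two_add_sq_smul_eq_cos_smul hx hode h₁ h₃ hs
  have hy₂ := iteratedDeriv_two_add_sq_smul_eq_cos_smul hx
    (by simpa only [add_comm (ω₁ ^ 2), mul_comm (ω₁ ^ 2)] using hode) h₁ h₃ hs
  calc
    x s = (ω₂ ^ 2 - ω₁ ^ 2)⁻¹ • (ω₂ ^ 2 - ω₁ ^ 2) • x s := (inv_smul_smul₀ hδ _).symm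
    _ = (ω₂ ^ 2 - ω₁ ^ 2)⁻¹ • ((iteratedDeriv 2 x s + ω₂ ^ 2 • x s)
        - (iteratedDeriv 2 x s + ω₁ ^ 2 • x s)) := by module
    _ = _ := by rw [hy₁, hy₂]; module

end FourthOrder

section Independence

variable {ω₁ ω₂ : ℝ}

theorem exists_cos_mul_ne_cos_mul (hω : ω₁ ^ 2 ≠ ω₂ ^ 2) {T : ℝ} (hT : 0 < T) :
    ∃ t ∈ Ioc 0 T, cos (ω₁ * t) ≠ cos (ω₂ * t) := by
  have habs : |ω₁| ≠ |ω₂| := mt (sq_eq_sq_iff_abs_eq_abs _ _).mpr hω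
  have hsum : 0 < |ω₁| + |ω₂| := by grind
  set t := min T (π / (|ω₁| + |ω₂|))
  have ht : 0 < t := lt_min hT (by positivity)
  have ht_pi : (|ω₁| + |ω₂|) * t ≤ π := (le_div_iff₀' hsum).mp (min_le_right _ _)
  have cos_abs_mul (ω : ℝ) : cos (|ω| * t) = cos (ω * t) := by
    rw [← cos_abs (ω * t), abs_mul, abs_of_pos ht]
  refine ⟨t, ⟨ht, min_le_left _ _⟩, fun hcos => habs (mul_right_cancel₀ ht.ne' ?_)⟩
  rw [← cos_abs_mul ω₁, ← cos_abs_mul ω₂] at hcos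
  refine injOn_cos ⟨by positivity, le_trans ?_ ht_pi⟩ ⟨by positivity, le_trans ?_ ht_pi⟩ hcos
  · gcongr
    exact le_add_of_nonneg_right (abs_nonneg _)
  · gcongr
    exact le_add_of_nonneg_left (abs_nonneg _)

theorem eq_zero_of_cos_smul_add_cos_smul_eq_zero {M : Type*} [AddCommGroup M] [Module ℝ M]
    (hω : ω₁ ^ 2 ≠ ω₂ ^ 2) {a b : ℝ} (hab : a < b) {u v : M}
    (h : ∀ s ∈ Icc a b, cos (ω₁ * (s - a)) • u + cos (ω₂ * (s - a)) • v = 0) :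
    u = 0 ∧ v = 0 := by
  obtain ⟨t, ⟨ht, htb⟩, hcos⟩ := exists_cos_mul_ne_cos_mul hω (sub_pos.mpr hab)
  have h_left : u + v = 0 := by simpa using h a (left_mem_Icc.mpr hab.le)
  have h_right : cos (ω₁ * t) • u + cos (ω₂ * t) • v = 0 := by
    simpa using h (a + t) ⟨by linarith, by linarith⟩
  have hu : u = 0 := by
    refine (smul_eq_zero.mp ?_).resolve_left (sub_ne_zero.mpr hcos)
    linear_combination (norm := module) h_right - cos (ω₂ * t) • h_left
  exact ⟨hu, by simpa only [hu, zero_add] using h_left⟩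

end Independence

theorem eq_add_and_eq_mul_of_quadratic_roots {R : Type*} [CommRing R] [NoZeroDivisors R]
    {p q α β : R} (hpq : p ≠ q) (hp : p ^ 2 - α * p + β = 0) (hq : q ^ 2 - α * q + β = 0) :
    α = p + q ∧ β = p * q := by
  have hα : α = p + q := by
    apply mul_left_cancel₀ (sub_ne_zero.mpr hpq)
    linear_combination hq - hp
  exact ⟨hα, by rw [hα] at hp; linear_combination hp⟩

theorem sq_odd_mul_pi_div_ne_sq {r : ℝ} (hr : r ≠ 0) {m n : ℕ} (hm : 1 ≤ m) (hn : 1 ≤ n)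
    (hmn : m ≠ n) :
    ((2 * (m : ℝ) - 1) * π / (4 * r)) ^ 2 ≠ ((2 * (n : ℝ) - 1) * π / (4 * r)) ^ 2 := by
  have two_mul_sub_one_nonneg {k : ℕ} (hk : 1 ≤ k) : 0 ≤ 2 * (k : ℝ) - 1 := by
    have : (1 : ℝ) ≤ k := mod_cast hk
    linarith
  intro h
  have hodd : (2 * (m : ℝ) - 1) ^ 2 = (2 * (n : ℝ) - 1) ^ 2 := by
    field_simp at h
    exact h
  rw [sq_eq_sq₀ (two_mul_sub_one_nonneg hm) (two_mul_sub_one_nonneg hn)] at hodd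
  exact hmn (by exact_mod_cast (by linarith : (m : ℝ) = n))

theorem stmt_3_general {E : Type*} [NormedAddCommGroup E] [NormedSpace ℝ E] {r : ℝ} (hr : 0 < r)
    {α β ω₁ ω₂ : ℝ} (hω : ω₁ ^ 2 ≠ ω₂ ^ 2)
    (hray₁ : β = ω₁ ^ 2 * α - (ω₁ ^ 2) ^ 2) (hray₂ : β = ω₂ ^ 2 * α - (ω₂ ^ 2) ^ 2) :
    (∀ u v : E, (∀ s ∈ Icc (-r) r,
        (2 * cos (ω₁ * (s + r))) • u + (2 * cos (ω₂ * (s + r))) • v = 0) → u = 0 ∧ v = 0) ∧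
    (∀ x : ℝ → E, ContDiff ℝ 4 x →
      (∀ s ∈ Icc (-r) r, iteratedDeriv 4 x s + α • iteratedDeriv 2 x s + β • x s = 0) →
      iteratedDeriv 1 x (-r) = 0 → iteratedDeriv 3 x (-r) = 0 →
      ∃ u v : E, ∀ s ∈ Icc (-r) r,
        x s = (2 * cos (ω₁ * (s + r))) • u + (2 * cos (ω₂ * (s + r))) • v) := by
  obtain ⟨rfl, rfl⟩ : α = ω₁ ^ 2 + ω₂ ^ 2 ∧ β = ω₁ ^ 2 * ω₂ ^ 2 :=
    eq_add_and_eq_mul_of_quadratic_roots hω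
      (by linear_combination hray₁) (by linear_combination hray₂)
  refine ⟨fun u v h => ?_, fun x hx hode h₁ h₃ => ?_⟩
  · refine eq_zero_of_cos_smul_add_cos_smul_eq_zero hω (neg_lt_self hr) fun s hs => ?_
    rw [sub_neg_eq_add]
    linear_combination (norm := module) (2⁻¹ : ℝ) • h s hs
  · obtain ⟨u, v, huv⟩ := exists_eq_cos_smul_add_cos_smul hω hx hode h₁ h₃
    refine ⟨(2⁻¹ : ℝ) • u, (2⁻¹ : ℝ) • v, fun s hs => ?_⟩
    rw [huv s hs, sub_neg_eq_add]
    module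

/-- At an intersection point of two distinct rays `l_{m₁}`, `l_{m₂}`, the two
functions `e_{m₁}`, `e_{m₂}` are linearly independent and every solution of the linear boundary
value problem is a linear combination of them. -/
theorem stmt_3 (r : ℝ) (hr : 0 < r)
    (c : ℕ → ℝ)
    (hc : ∀ k : ℕ, c k = -(π / r) ^ 2 * ((2 * (k : ℝ) - 1) / 4) ^ 2)
    (m₁ m₂ : ℕ) (hm₁ : 1 ≤ m₁) (hm₂ : 1 ≤ m₂) (hne : m₁ ≠ m₂)
    (α β : ℝ) (hα : 0 < α) (hβ : 0 < β)
    (hray₁ : β = -(c m₁) * α - (c m₁) ^ 2)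
    (hray₂ : β = -(c m₂) * α - (c m₂) ^ 2)
    (ω₁ ω₂ : ℝ)
    (hω₁ : ω₁ = ((2 * (m₁ : ℝ) - 1) * π) / (4 * r))
    (hω₂ : ω₂ = ((2 * (m₂ : ℝ) - 1) * π) / (4 * r))
    (e₁ e₂ : ℝ → ℝ)
    (he₁ : e₁ = fun s => 2 * Real.cos (ω₁ * (s + r)))
    (he₂ : e₂ = fun s => 2 * Real.cos (ω₂ * (s + r))) :
    (∀ a b : ℝ, (∀ s ∈ Icc (-r) r, a * e₁ s + b * e₂ s = 0) → a = 0 ∧ b = 0) ∧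
    (∀ x : ℝ → ℝ, ContDiff ℝ 4 x →
      (∀ s ∈ Icc (-r) r,
        iteratedDeriv 4 x s + α * iteratedDeriv 2 x s + β * x s = 0) →
      iteratedDeriv 1 x (-r) = 0 → iteratedDeriv 3 x (-r) = 0 →
      x r = 0 → iteratedDeriv 2 x r = 0 →
      ∃ a b : ℝ, ∀ s ∈ Icc (-r) r, x s = a * e₁ s + b * e₂ s) := by
  have ray_eq (k : ℕ) : -(c k) = ((2 * (k : ℝ) - 1) * π / (4 * r)) ^ 2 := by rw [hc]; ring
  rw [← neg_sq, ray_eq, ← hω₁] at hray₁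
  rw [← neg_sq, ray_eq, ← hω₂] at hray₂
  have hω : ω₁ ^ 2 ≠ ω₂ ^ 2 := hω₁ ▸ hω₂ ▸ sq_odd_mul_pi_div_ne_sq hr.ne' hm₁ hm₂ hne
  obtain ⟨independent, spanning⟩ := stmt_3_general (E := ℝ) hr hω hray₁ hray₂
  simp only [he₁, he₂, mul_comm (_ : ℝ) (2 * cos _)]
  exact ⟨independent, fun x hx hode h₁ h₃ _ _ => spanning x hx hode h₁ h₃⟩
end

section
/- Let r>0 and let α_0>0, β_0>0, γ_0>0 be such that β_0 ≠ -c_m·α_0 - c_m^2 for every integer m≥1, where c_m = -(π/r)^2·((2m-1)/4)^2. Then there exists ε>0 such that: whenever α, β, γ are positive reals with |α-α_0| < ε, |β-β_0| < ε, |γ-γ_0| < ε, and x is a four times continuously differentiable function on [-r,r] satisfying the boundary conditions x'(-r) = x'''(-r) = 0, x(r) = x''(r) = 0, the nonlinear equation x'''' + α·x'' + β·x - γ·x^3 - 3·(x'')^3 - 12·x'·x''·x''' - 3·(x')^2·(x'''' - (α/2)·x'') = 0 on [-r,r], and the smallness condition sup_{s∈[-r,r]}|x^{(k)}(s)| < ε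 for k = 0,1,2,3,4, it follows that x ≡ 0. (Necessity part of the main theorem: no bifurcation occurs at parameters where the linearization has trivial kernel.) -/
open Real Set

/-!
Factor the linearization `x'''' + α₀ x'' + β₀ x` as `(D² + ω²)(D² + η²) x` over `ℂ`. The boundary
conditions split into the same mixed conditions `u'(a) = 0`, `u(b) = 0` for `u = x'' + η² x` and for
`x`. A solution of `u'' + ω² u = f` on `[a, b]` with these conditions satisfies `|u| ≤ C sup |f|` as
soon as `cos (ω (b - a)) ≠ 0`: the difference of `u` and `u(a) cos (ω (t - a))` has zero initial
data, so it is controlled by Grönwall's inequality, and `u(b) = 0` then controls `u(a)`. Hence `x`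
and its first four derivatives are bounded by a constant times `sup |x'''' + α₀ x'' + β₀ x|`, which
for a solution of size `M ≤ ε` is at most a constant times `ε M`. For small `ε` this forces `M = 0`.
-/

section Jet

variable {E : Type*} [NormedAddCommGroup E]

/-- The functions `x 1, …, x n` are the successive derivatives of `x 0` on the set `s`, derivatives
being taken within `s` so that they are one-sided at the ends of a closed interval. -/
def IsJetOn [NormedSpace ℝ E] (n : ℕ) (x : ℕ → ℝ → E) (s : Set ℝ) : Prop :=
  ∀ k < n, ∀ t ∈ s, HasDerivWithinAt (x k) (x (k + 1) t) s t

namespace IsJetOn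

variable {n : ℕ} {x y : ℕ → ℝ → E} {s : Set ℝ}

section Real

variable [NormedSpace ℝ E]

lemma of_le (hx : IsJetOn n x s) {m : ℕ} (hmn : m ≤ n) : IsJetOn m x s :=
  fun k hk => hx k (hk.trans_le hmn)

lemma shift (hx : IsJetOn n x s) {m l : ℕ} (hml : m + l ≤ n) :
    IsJetOn m (fun k => x (k + l)) s := by
  intro k hk
  have h := hx (k + l) (by omega)
  rwa [Nat.add_right_comm] at h

lemma add (hx : IsJetOn n x s) (hy : IsJetOn n y s) :
    IsJetOn n (fun k t => x k t + y k t) s :=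
  fun k hk t ht => (hx k hk t ht).add (hy k hk t ht)

lemma sub (hx : IsJetOn n x s) (hy : IsJetOn n y s) :
    IsJetOn n (fun k t => x k t - y k t) s :=
  fun k hk t ht => (hx k hk t ht).sub (hy k hk t ht)

end Real

section Complex

variable [NormedSpace ℂ E]

lemma const_smul (hx : IsJetOn n x s) (z : ℂ) : IsJetOn n (fun k t => z • x k t) s :=
  fun k hk t ht => (hx k hk t ht).const_smul z

lemma smul_const {f : ℕ → ℝ → ℂ} (hf : IsJetOn n f s) (e : E) :
    IsJetOn n (fun k t => f k t • e) s :=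
  fun k hk t ht => (hf k hk t ht).smul_const e

end Complex

lemma ofReal {f : ℕ → ℝ → ℝ} (hf : IsJetOn n f s) : IsJetOn n (fun k t => (f k t : ℂ)) s :=
  fun k hk t ht => (hf k hk t ht).ofReal_comp

end IsJetOn

lemma isJetOn_iteratedDeriv [NormedSpace ℝ E] {n : ℕ} {f : ℝ → E} (hf : ContDiff ℝ n f)
    (s : Set ℝ) : IsJetOn n (fun k => iteratedDeriv k f) s := by
  intro k hk t _
  have h := (hf.differentiable_iteratedDeriv k (by exact_mod_cast hk) t).hasDerivAt
  rw [← iteratedDeriv_succ] at h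
  exact h.hasDerivWithinAt

/-- The successive derivatives of `t ↦ cos (ω * (t - a))`, written with a phase shift by `π / 2`
for each differentiation. -/
noncomputable def cosJet (ω : ℂ) (a : ℝ) (k : ℕ) (t : ℝ) : ℂ :=
  ω ^ k * Complex.cos (ω * (t - a) + k * (π / 2))

lemma isJetOn_cosJet (ω : ℂ) (a : ℝ) (n : ℕ) (s : Set ℝ) : IsJetOn n (cosJet ω a) s := by
  intro k _ t _
  have hphase : HasDerivAt (fun t : ℝ => ω * ((t : ℂ) - a) + k * (π / 2)) ω t := by
    simpa using ((((hasDerivAt_id t).ofReal_comp).sub_const (a : ℂ)).const_mul ω).add_const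
      (k * (π / 2) : ℂ)
  have hcos := ((Complex.hasDerivAt_cos _).comp t hphase).const_mul (ω ^ k)
  refine (hcos.congr_deriv ?_).hasDerivWithinAt
  rw [cosJet, Nat.cast_succ, add_one_mul, ← add_assoc, Complex.cos_add_pi_div_two]
  ring

lemma cosJet_zero (ω : ℂ) (a t : ℝ) : cosJet ω a 0 t = Complex.cos (ω * (t - a)) := by
  simp [cosJet]

lemma cosJet_one_self (ω : ℂ) (a : ℝ) : cosJet ω a 1 a = 0 := by
  simp [cosJet, Complex.cos_pi_div_two]

lemma cosJet_two (ω : ℂ) (a t : ℝ) : cosJet ω a 2 t = -(ω ^ 2 * cosJet ω a 0 t) := by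
  have hπ : ω * (t - a) + (2 : ℕ) * (π / 2) = ω * (t - a) + π := by push_cast; ring
  rw [cosJet, hπ, Complex.cos_add_pi, cosJet_zero, mul_neg]

lemma exists_norm_cosJet_le (ω : ℂ) (a b : ℝ) (n : ℕ) :
    ∃ B ≥ 0, ∀ k ≤ n, ∀ t ∈ Icc a b, ‖cosJet ω a k t‖ ≤ B := by
  have hcont (k : ℕ) : Continuous (cosJet ω a k) := by unfold cosJet; fun_prop
  choose B hB using fun k => isCompact_Icc.exists_bound_of_continuousOn (hcont k).continuousOn
  obtain ⟨M, hM⟩ := ((Set.finite_Iic n).image B).bddAbove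
  exact ⟨max M 0, le_max_right _ _, fun k hk t ht =>
    (hB k t ht).trans ((hM ⟨k, hk, rfl⟩).trans (le_max_left _ _))⟩

end Jet

section LinearEstimates

variable {E : Type*} [NormedAddCommGroup E] [NormedSpace ℂ E] {a b : ℝ}

lemma norm_le_of_norm_add_smul_le {x y : E} {κ : ℂ} {p q : ℝ} (hxy : ‖x + κ • y‖ ≤ p)
    (hy : ‖y‖ ≤ q) : ‖x‖ ≤ p + ‖κ‖ * q := calc
  ‖x‖ ≤ ‖x + κ • y‖ + ‖κ • y‖ := norm_le_add_norm_add _ _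
  _ ≤ p + ‖κ‖ * q := by rw [norm_smul]; gcongr

lemma gronwallBound_zero_le {K F x : ℝ} (hK : 1 ≤ K) (hF : 0 ≤ F) (hx : 0 ≤ x) :
    gronwallBound 0 K F x ≤ F * exp (K * x) := by
  have hK0 : 0 < K := one_pos.trans_le hK
  simp only [gronwallBound_of_K_ne_0 hK0.ne', zero_mul, zero_add]
  exact mul_le_mul (div_le_self hF hK) (sub_le_self _ zero_le_one)
    (sub_nonneg.2 (one_le_exp (by positivity))) hF

lemma IsJetOn.norm_le_of_initial_zero {z : ℕ → ℝ → E} (hz : IsJetOn 2 z (Icc a b))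
    (hz0 : z 0 a = 0) (hz1 : z 1 a = 0) {κ : ℂ} {F : ℝ}
    (hF : ∀ t ∈ Icc a b, ‖z 2 t + κ • z 0 t‖ ≤ F) {t : ℝ} (ht : t ∈ Icc a b) {k : ℕ}
    (hk : k ≤ 1) : ‖z k t‖ ≤ exp ((1 + ‖κ‖) * (b - a)) * F := by
  set K : ℝ := 1 + ‖κ‖
  have hK : 1 ≤ K := le_add_of_nonneg_right (norm_nonneg κ)
  have hF0 : 0 ≤ F := (norm_nonneg _).trans (hF t ht)
  have hphase (s : ℝ) (hs : s ∈ Icc a b) :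
      HasDerivWithinAt (fun s => (z 0 s, z 1 s)) (z 1 s, z 2 s) (Icc a b) s :=
    (hz 0 two_pos s hs).prodMk (hz 1 one_lt_two s hs)
  have hgrowth (s : ℝ) (hs : s ∈ Icc a b) :
      ‖(z 1 s, z 2 s)‖ ≤ K * ‖(z 0 s, z 1 s)‖ + F := by
    have h0 : ‖z 0 s‖ ≤ ‖(z 0 s, z 1 s)‖ := le_max_left _ _
    have h1 : ‖z 1 s‖ ≤ ‖(z 0 s, z 1 s)‖ := le_max_right _ _
    have h2 : ‖z 2 s‖ ≤ F + ‖κ‖ * ‖(z 0 s, z 1 s)‖ := norm_le_of_norm_add_smul_le (hF s hs) h0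
    have hκ := mul_nonneg (norm_nonneg κ) (norm_nonneg (z 0 s, z 1 s))
    refine max_le ?_ ?_ <;> simp only [K] <;> linarith [norm_nonneg (z 0 s, z 1 s)]
  have hgronwall := norm_le_gronwallBound_of_norm_deriv_right_le (δ := 0)
    (fun s hs => (hphase s hs).continuousWithinAt)
    (fun s hs => (hphase s (Ico_subset_Icc_self hs)).mono_of_mem_nhdsWithin
      (Icc_mem_nhdsGE_of_mem hs))
    (by simp [hz0, hz1]) (fun s hs => hgrowth s (Ico_subset_Icc_self hs)) t ht
  have hcomponent : ‖z k t‖ ≤ ‖(z 0 t, z 1 t)‖ := by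
    interval_cases k
    exacts [le_max_left _ _, le_max_right _ _]
  calc ‖z k t‖ ≤ gronwallBound 0 K F (t - a) := hcomponent.trans hgronwall
    _ ≤ F * exp (K * (t - a)) := gronwallBound_zero_le hK hF0 (sub_nonneg.2 ht.1)
    _ ≤ F * exp (K * (b - a)) := by gcongr; exact ht.2
    _ = exp (K * (b - a)) * F := mul_comm _ _

lemma IsJetOn.norm_sub_cosJet_smul_le {u : ℕ → ℝ → E} (hu : IsJetOn 2 u (Icc a b))
    (hu1 : u 1 a = 0) {ω : ℂ} {F : ℝ} (hF : ∀ t ∈ Icc a b, ‖u 2 t + ω ^ 2 • u 0 t‖ ≤ F) {t : ℝ}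
    (ht : t ∈ Icc a b) {k : ℕ} (hk : k ≤ 1) :
    ‖u k t - cosJet ω a k t • u 0 a‖ ≤ exp ((1 + ‖ω ^ 2‖) * (b - a)) * F := by
  refine (hu.sub ((isJetOn_cosJet ω a 2 _).smul_const (u 0 a))).norm_le_of_initial_zero
    (by simp [cosJet_zero]) (by simp [hu1, cosJet_one_self]) (fun s hs => ?_) ht hk
  convert hF s hs using 2
  rw [cosJet_two]
  module

theorem exists_norm_le_of_mixed_boundary {ω : ℂ} (hω : Complex.cos (ω * (b - a)) ≠ 0) :
    ∃ C ≥ 0, ∀ u : ℕ → ℝ → E, IsJetOn 2 u (Icc a b) → u 1 a = 0 → u 0 b = 0 →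
      ∀ F : ℝ, (∀ t ∈ Icc a b, ‖u 2 t + ω ^ 2 • u 0 t‖ ≤ F) →
      ∀ k ≤ 2, ∀ t ∈ Icc a b, ‖u k t‖ ≤ C * F := by
  obtain ⟨B, hB0, hB⟩ := exists_norm_cosJet_le ω a b 1
  set G : ℝ := exp ((1 + ‖ω ^ 2‖) * (b - a))
  set D : ℝ := G + B * (G / ‖Complex.cos (ω * (b - a))‖)
  have hD : 0 ≤ D := by positivity
  refine ⟨1 + (1 + ‖ω ^ 2‖) * D, add_nonneg zero_le_one (mul_nonneg (by positivity) hD),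
    fun u hu hu1 hu0 F hF => ?_⟩
  have hG : ∀ k ≤ 1, ∀ t ∈ Icc a b, ‖u k t - cosJet ω a k t • u 0 a‖ ≤ G * F :=
    fun k hk t ht => hu.norm_sub_cosJet_smul_le hu1 hF ht hk
  intro k hk t ht
  have hF0 : 0 ≤ F := (norm_nonneg _).trans (hF t ht)
  have hinitial : ‖u 0 a‖ ≤ G / ‖Complex.cos (ω * (b - a))‖ * F := by
    have hb := hG 0 zero_le_one b ⟨ht.1.trans ht.2, le_rfl⟩
    rw [hu0, zero_sub, norm_neg, norm_smul, cosJet_zero] at hb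
    rwa [div_mul_eq_mul_div, le_div_iff₀' (norm_pos_iff.2 hω)]
  have hlow : ∀ k ≤ 1, ‖u k t‖ ≤ D * F := fun k hk => calc
    ‖u k t‖ = ‖(u k t - cosJet ω a k t • u 0 a) + cosJet ω a k t • u 0 a‖ := by
      rw [sub_add_cancel]
    _ ≤ ‖u k t - cosJet ω a k t • u 0 a‖ + ‖cosJet ω a k t‖ * ‖u 0 a‖ := by
      rw [← norm_smul]; exact norm_add_le _ _
    _ ≤ G * F + B * (G / ‖Complex.cos (ω * (b - a))‖ * F) := by
      gcongr
      exacts [hG k hk t ht, hB k hk t ht]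
    _ = D * F := by ring
  have hDF : 0 ≤ D * F := by positivity
  have hωDF : 0 ≤ ‖ω ^ 2‖ * (D * F) := by positivity
  rcases Nat.le_succ_iff.1 hk with hk1 | rfl
  · linarith [hlow k hk1]
  · have htop : ‖u 2 t‖ ≤ F + ‖ω ^ 2‖ * (D * F) :=
      norm_le_of_norm_add_smul_le (hF t ht) (hlow 0 zero_le_one)
    linarith

theorem exists_norm_le_of_factored_fourth_order {ω η : ℂ}
    (hω : Complex.cos (ω * (b - a)) ≠ 0) (hη : Complex.cos (η * (b - a)) ≠ 0) :
    ∃ C ≥ 0, ∀ x : ℕ → ℝ → E, IsJetOn 4 x (Icc a b) →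
      x 1 a = 0 → x 3 a = 0 → x 0 b = 0 → x 2 b = 0 →
      ∀ F : ℝ,
        (∀ t ∈ Icc a b, ‖x 4 t + (ω ^ 2 + η ^ 2) • x 2 t + (ω ^ 2 * η ^ 2) • x 0 t‖ ≤ F) →
      ∀ k ≤ 4, ∀ t ∈ Icc a b, ‖x k t‖ ≤ C * F := by
  obtain ⟨K, hK, hKest⟩ := exists_norm_le_of_mixed_boundary (E := E) hω
  obtain ⟨L, hL, hLest⟩ := exists_norm_le_of_mixed_boundary (E := E) hη
  refine ⟨K + (1 + ‖η ^ 2‖) * (L * K), by positivity, fun x hx hx1 hx3 hx0 hx2 F hF => ?_⟩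
  have hfactor : ∀ k ≤ 2, ∀ t ∈ Icc a b, ‖x (k + 2) t + η ^ 2 • x k t‖ ≤ K * F := by
    refine hKest (fun k t => x (k + 2) t + η ^ 2 • x k t)
      ((hx.shift (by norm_num)).add ((hx.of_le (by norm_num)).const_smul _))
      (by simp [hx1, hx3]) (by simp [hx0, hx2]) F fun t ht => ?_
    convert hF t ht using 2
    module
  have hlow : ∀ k ≤ 2, ∀ t ∈ Icc a b, ‖x k t‖ ≤ L * (K * F) :=
    hLest x (hx.of_le (by norm_num)) hx1 hx0 (K * F) (hfactor 0 (by norm_num))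
  intro k hk t ht
  have hF0 : 0 ≤ F := (norm_nonneg _).trans (hF t ht)
  have hKF : 0 ≤ K * F := by positivity
  have hLKF : 0 ≤ L * (K * F) := by positivity
  have hηLKF : 0 ≤ ‖η ^ 2‖ * (L * (K * F)) := by positivity
  rcases le_or_gt k 2 with hk2 | hk2
  · linarith [hlow k hk2 t ht]
  · obtain ⟨j, rfl⟩ := Nat.exists_eq_add_of_le' hk2.le
    have hj : j ≤ 2 := by omega
    have hhigh : ‖x (j + 2) t‖ ≤ K * F + ‖η ^ 2‖ * (L * (K * F)) :=
      norm_le_of_norm_add_smul_le (hfactor j hj t ht) (hlow j hj t ht)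
    linarith

theorem exists_norm_le_of_fourth_order {α β : ℂ}
    (h : ∀ ω : ℂ, ω ^ 4 - α * ω ^ 2 + β = 0 → Complex.cos (ω * (b - a)) ≠ 0) :
    ∃ C ≥ 0, ∀ x : ℕ → ℝ → E, IsJetOn 4 x (Icc a b) →
      x 1 a = 0 → x 3 a = 0 → x 0 b = 0 → x 2 b = 0 →
      ∀ F : ℝ, (∀ t ∈ Icc a b, ‖x 4 t + α • x 2 t + β • x 0 t‖ ≤ F) →
      ∀ k ≤ 4, ∀ t ∈ Icc a b, ‖x k t‖ ≤ C * F := by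
  obtain ⟨d, hd⟩ := IsAlgClosed.exists_pow_nat_eq (α ^ 2 - 4 * β) two_pos
  obtain ⟨ω, hω⟩ := IsAlgClosed.exists_pow_nat_eq ((α + d) / 2) two_pos
  obtain ⟨η, hη⟩ := IsAlgClosed.exists_pow_nat_eq ((α - d) / 2) two_pos
  obtain rfl : ω ^ 2 * η ^ 2 = β := by rw [hω, hη]; linear_combination -hd / 4
  obtain rfl : ω ^ 2 + η ^ 2 = α := by rw [hω, hη]; ring
  exact exists_norm_le_of_factored_fourth_order (h ω (by ring)) (h η (by ring))

end LinearEstimates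

section Resonance

lemma exists_sq_eq_of_cos_eq_zero {z : ℂ} (hz : Complex.cos z = 0) :
    ∃ m : ℕ, 1 ≤ m ∧ z ^ 2 = ((2 * m - 1) * π / 2) ^ 2 := by
  obtain ⟨k, rfl⟩ := Complex.cos_eq_zero_iff.1 hz
  rcases le_or_gt 0 k with hk | hk
  · obtain ⟨n, rfl⟩ := Int.eq_ofNat_of_zero_le hk
    exact ⟨n + 1, by omega, by push_cast; ring⟩
  · obtain ⟨n, hn⟩ := Int.eq_ofNat_of_zero_le (neg_nonneg.2 hk.le)
    obtain rfl : k = -n := by omega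
    exact ⟨n, by omega, by push_cast; ring⟩

lemma cos_ne_zero_of_characteristic_root {l α β ω : ℂ}
    (h : ∀ m : ℕ, 1 ≤ m →
      β ≠ ((2 * m - 1) * π / (2 * l)) ^ 2 * α - (((2 * m - 1) * π / (2 * l)) ^ 2) ^ 2)
    (hω : ω ^ 4 - α * ω ^ 2 + β = 0) : Complex.cos (ω * l) ≠ 0 := by
  intro hcos
  have hl : l ≠ 0 := by rintro rfl; simp at hcos
  obtain ⟨m, hm, hsq⟩ := exists_sq_eq_of_cos_eq_zero hcos
  have hω2 : ω ^ 2 = ((2 * m - 1) * π / (2 * l)) ^ 2 := by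
    rw [mul_pow, ← eq_div_iff (pow_ne_zero 2 hl)] at hsq
    rw [hsq]
    field_simp
  exact h m hm (by rw [← hω2]; linear_combination hω)

end Resonance

section Nonlinearity

/-- The right-hand side of the rod equation written as `x'''' + α x'' + β x = …`, at a point where
the `k`-th derivative of `x` equals `y k`. -/
noncomputable def rodNonlinearity (α γ : ℝ) (y : ℕ → ℝ) : ℝ :=
  γ * y 0 ^ 3 + 3 * y 2 ^ 3 + 12 * y 1 * y 2 * y 3 + 3 * y 1 ^ 2 * (y 4 - α / 2 * y 2)

lemma abs_rodNonlinearity_le (α γ : ℝ) {y : ℕ → ℝ} {M : ℝ} (hy : ∀ k ≤ 4, |y k| ≤ M) :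
    |rodNonlinearity α γ y| ≤ (|γ| + 3 / 2 * |α| + 18) * M ^ 3 := by
  have hM : 0 ≤ M := (abs_nonneg _).trans (hy 0 (by norm_num))
  have hcubic (d : ℝ) (i j k : ℕ) (hi : i ≤ 4 := by norm_num) (hj : j ≤ 4 := by norm_num)
      (hk : k ≤ 4 := by norm_num) : |d * (y i * y j * y k)| ≤ |d| * M ^ 3 := by
    rw [abs_mul, abs_mul, abs_mul, pow_three']
    gcongr
    exacts [hy i hi, hy j hj, hy k hk]
  have h000 := hcubic γ 0 0 0
  have h222 := hcubic 3 2 2 2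
  have h123 := hcubic 12 1 2 3
  have h114 := hcubic 3 1 1 4
  have h112 := hcubic (3 / 2 * α) 1 1 2
  simp only [abs_mul (3 / 2 : ℝ), Nat.abs_ofNat, abs_div] at h222 h123 h114 h112
  rw [abs_le] at h000 h222 h123 h114 h112 ⊢
  constructor <;> simp only [rodNonlinearity] <;> linarith

lemma abs_linearization_le_of_eq_rodNonlinearity {α₀ β₀ γ₀ α β γ ε M : ℝ} {y : ℕ → ℝ}
    (hε : ε ≤ 1) (hα : |α - α₀| ≤ ε) (hβ : |β - β₀| ≤ ε) (hγ : |γ - γ₀| ≤ ε) (hM : M ≤ ε)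
    (hy : ∀ k ≤ 4, |y k| ≤ M) (h : y 4 + α * y 2 + β * y 0 = rodNonlinearity α γ y) :
    |y 4 + α₀ * y 2 + β₀ * y 0| ≤ (|γ₀| + 3 / 2 * |α₀| + 23) * ε * M := by
  have hM0 : 0 ≤ M := (abs_nonneg _).trans (hy 0 (by norm_num))
  have hε0 : 0 ≤ ε := hM0.trans hM
  have hα1 : |α| ≤ |α₀| + 1 := by linarith [abs_sub_abs_le_abs_sub α α₀]
  have hγ1 : |γ| ≤ |γ₀| + 1 := by linarith [abs_sub_abs_le_abs_sub γ γ₀]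
  have hcube : M ^ 3 ≤ ε * M := calc
    M ^ 3 = M * M * M := pow_three' M
    _ ≤ ε * 1 * M := by gcongr; exact hM.trans hε
    _ = ε * M := by rw [mul_one]
  have hαy : |(α - α₀) * y 2| ≤ ε * M := by
    rw [abs_mul]; gcongr; exact hy 2 (by norm_num)
  have hβy : |(β - β₀) * y 0| ≤ ε * M := by
    rw [abs_mul]; gcongr; exact hy 0 (by norm_num)
  have hsplit : y 4 + α₀ * y 2 + β₀ * y 0
      = rodNonlinearity α γ y - (α - α₀) * y 2 - (β - β₀) * y 0 := by linear_combination h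
  calc |y 4 + α₀ * y 2 + β₀ * y 0|
      ≤ |rodNonlinearity α γ y| + |(α - α₀) * y 2| + |(β - β₀) * y 0| := by
        rw [hsplit]
        exact (abs_sub _ _).trans (add_le_add_left (abs_sub _ _) _)
    _ ≤ (|γ| + 3 / 2 * |α| + 18) * M ^ 3 + ε * M + ε * M := by
        gcongr; exact abs_rodNonlinearity_le α γ hy
    _ ≤ (|γ₀| + 1 + 3 / 2 * (|α₀| + 1) + 18) * (ε * M) + ε * M + ε * M := by gcongr
    _ ≤ (|γ₀| + 3 / 2 * |α₀| + 23) * ε * M := by linarith [mul_nonneg hε0 hM0]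

end Nonlinearity

lemma nonpos_of_bound_contracts {ι : Type*} {s : Set ι} {f : ι → ℝ} {ε q : ℝ} (hq : q < 1)
    (hε : ∀ i ∈ s, f i ≤ ε)
    (hcontr : ∀ M ≤ ε, (∀ i ∈ s, f i ≤ M) → ∀ i ∈ s, f i ≤ q * M) : ∀ i ∈ s, f i ≤ 0 := by
  intro i hi
  have hne : (f '' s).Nonempty := ⟨f i, i, hi, rfl⟩
  have hle : ∀ j ∈ s, f j ≤ sSup (f '' s) := fun j hj =>
    le_csSup ⟨ε, forall_mem_image.2 hε⟩ ⟨j, hj, rfl⟩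
  have hcontr_sup : sSup (f '' s) ≤ q * sSup (f '' s) :=
    csSup_le hne (forall_mem_image.2
      (hcontr _ (csSup_le hne (forall_mem_image.2 hε)) hle))
  have hsup : sSup (f '' s) ≤ 0 := by nlinarith
  exact (hle i hi).trans hsup

theorem exists_abs_le_of_nonresonant {r : ℝ} {c : ℕ → ℝ}
    (hc : ∀ m : ℕ, c m = -(π / r) ^ 2 * ((2 * (m : ℝ) - 1) / 4) ^ 2) {α₀ β₀ : ℝ}
    (hray : ∀ m : ℕ, 1 ≤ m → β₀ ≠ -(c m) * α₀ - (c m) ^ 2) :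
    ∃ C ≥ 0, ∀ x : ℕ → ℝ → ℝ, IsJetOn 4 x (Icc (-r) r) →
      x 1 (-r) = 0 → x 3 (-r) = 0 → x 0 r = 0 → x 2 r = 0 →
      ∀ F : ℝ, (∀ s ∈ Icc (-r) r, |x 4 s + α₀ * x 2 s + β₀ * x 0 s| ≤ F) →
      ∀ k ≤ 4, ∀ s ∈ Icc (-r) r, |x k s| ≤ C * F := by
  have hnonres (ω : ℂ) (hω : ω ^ 4 - α₀ * ω ^ 2 + β₀ = 0) :
      Complex.cos (ω * (r - (-r : ℝ))) ≠ 0 := by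
    refine cos_ne_zero_of_characteristic_root (fun m hm hβ => hray m hm ?_) hω
    have hcm : -c m = ((2 * m - 1) * π / (2 * (r - -r))) ^ 2 := by rw [hc]; ring
    rw [← neg_sq (c m), hcm]
    exact_mod_cast hβ
  obtain ⟨C, hC, hest⟩ := exists_norm_le_of_fourth_order (E := ℂ) hnonres
  refine ⟨C, hC, fun x hx h1 h3 h0 h2 F hF k hk s hs => ?_⟩
  have hbound := hest (fun k t => (x k t : ℂ)) hx.ofReal (by simp [h1]) (by simp [h3])
    (by simp [h0]) (by simp [h2]) F (fun t ht => by
      simpa only [smul_eq_mul, ← Complex.ofReal_mul, ← Complex.ofReal_add, Complex.norm_real,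
        Real.norm_eq_abs] using hF t ht) k hk s hs
  rwa [Complex.norm_real] at hbound

theorem stmt_13_general (r : ℝ) (c : ℕ → ℝ)
    (hc : ∀ m : ℕ, c m = -(π / r) ^ 2 * ((2 * (m : ℝ) - 1) / 4) ^ 2) (α₀ β₀ γ₀ : ℝ)
    (hray : ∀ m : ℕ, 1 ≤ m → β₀ ≠ -(c m) * α₀ - (c m) ^ 2) :
    ∃ ε > 0, ∀ α β γ : ℝ, |α - α₀| < ε → |β - β₀| < ε → |γ - γ₀| < ε →
      ∀ x : ℕ → ℝ → ℝ, IsJetOn 4 x (Icc (-r) r) →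
        x 1 (-r) = 0 → x 3 (-r) = 0 → x 0 r = 0 → x 2 r = 0 →
        (∀ s ∈ Icc (-r) r,
          x 4 s + α * x 2 s + β * x 0 s - γ * (x 0 s) ^ 3 - 3 * (x 2 s) ^ 3
            - 12 * x 1 s * x 2 s * x 3 s
            - 3 * (x 1 s) ^ 2 * (x 4 s - (α / 2) * x 2 s) = 0) →
        (∀ k : ℕ, k ≤ 4 → ∀ s ∈ Icc (-r) r, |x k s| < ε) →
        ∀ s ∈ Icc (-r) r, x 0 s = 0 := by
  obtain ⟨C, hC, hest⟩ := exists_abs_le_of_nonresonant hc hray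
  set N : ℝ := |γ₀| + 3 / 2 * |α₀| + 23
  obtain ⟨δ, hδ, hCNδ⟩ := exists_pos_mul_lt one_pos (C * N)
  refine ⟨min 1 δ, lt_min one_pos hδ,
    fun α β γ hα hβ hγ x hx h1 h3 h0 h2 heq hsmall s hs => ?_⟩
  set ε : ℝ := min 1 δ
  have hq : C * N * ε < 1 :=
    (mul_le_mul_of_nonneg_left (min_le_right 1 δ) (by positivity)).trans_lt hCNδ
  have hcontr (M : ℝ) (hM : M ≤ ε) (hxM : ∀ p ∈ Iic 4 ×ˢ Icc (-r) r, |x p.1 p.2| ≤ M) :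
      ∀ p ∈ Iic 4 ×ˢ Icc (-r) r, |x p.1 p.2| ≤ C * N * ε * M := by
    rintro ⟨k, s⟩ ⟨hk, hs⟩
    refine (hest x hx h1 h3 h0 h2 (N * ε * M) (fun t ht => ?_) k hk s hs).trans_eq (by ring)
    exact abs_linearization_le_of_eq_rodNonlinearity (y := fun k => x k t) (min_le_left 1 δ)
      hα.le hβ.le hγ.le hM (fun k hk => hxM (k, t) ⟨hk, ht⟩)
      (by rw [rodNonlinearity]; linear_combination heq t ht)
  exact abs_nonpos_iff.1 (nonpos_of_bound_contracts hq (fun p hp => (hsmall _ hp.1 _ hp.2).le)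
    hcontr (0, s) ⟨Nat.zero_le 4, hs⟩)

/-- No bifurcation at parameter points where the linearization has trivial
kernel: small solutions of the nonlinear equation for nearby parameters are trivial. -/
theorem stmt_13 (r : ℝ) (hr : 0 < r)
    (c : ℕ → ℝ)
    (hc : ∀ m : ℕ, c m = -(π / r) ^ 2 * ((2 * (m : ℝ) - 1) / 4) ^ 2)
    (α₀ β₀ γ₀ : ℝ) (hα₀ : 0 < α₀) (hβ₀ : 0 < β₀) (hγ₀ : 0 < γ₀)
    (hray : ∀ m : ℕ, 1 ≤ m → β₀ ≠ -(c m) * α₀ - (c m) ^ 2) :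
    ∃ ε > 0, ∀ α β γ : ℝ, 0 < α → 0 < β → 0 < γ →
      |α - α₀| < ε → |β - β₀| < ε → |γ - γ₀| < ε →
      ∀ x : ℝ → ℝ, ContDiff ℝ 4 x →
        iteratedDeriv 1 x (-r) = 0 → iteratedDeriv 3 x (-r) = 0 →
        x r = 0 → iteratedDeriv 2 x r = 0 →
        (∀ s ∈ Icc (-r) r,
          iteratedDeriv 4 x s + α * iteratedDeriv 2 x s + β * x s
            - γ * (x s) ^ 3 - 3 * (iteratedDeriv 2 x s) ^ 3
            - 12 * iteratedDeriv 1 x s * iteratedDeriv 2 x s * iteratedDeriv 3 x s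
            - 3 * (iteratedDeriv 1 x s) ^ 2 *
                (iteratedDeriv 4 x s - (α / 2) * iteratedDeriv 2 x s) = 0) →
        (∀ k : ℕ, k ≤ 4 → ∀ s ∈ Icc (-r) r, |iteratedDeriv k x s| < ε) →
        ∀ s ∈ Icc (-r) r, x s = 0 := by
  obtain ⟨ε, hε, h⟩ := stmt_13_general r c hc α₀ β₀ γ₀ hray
  exact ⟨ε, hε, fun α β γ _ _ _ hα hβ hγ x hx =>
    iteratedDeriv_zero (𝕜 := ℝ) (f := x) ▸
      h α β γ hα hβ hγ (iteratedDeriv · x) (isJetOn_iteratedDeriv hx _)⟩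
end

section
/- Let r>0, let m≥1 be an integer with c_m = -(π/r)^2·((2m-1)/4)^2, and let α_0>0, β_0>0, γ_0>0 be such that β_0 = -c_m·α_0 - c_m^2 while β_0 ≠ -c_k·α_0 - c_k^2 for every integer k≥1 with k ≠ m (simple point). Then for every ε>0 there exist a positive real β with |β-β_0| < ε and a four times continuously differentiable function x on [-r,r], not identically zero, satisfying the boundary conditions x'(-r) = x'''(-r) = 0, x(r) = x''(r) = 0, the nonlinear equation x'''' + α_0·x'' + β·x - γ_0·x^3 - 3·(x'')^3 - 12·x'·x''·x''' - 3·(x')^2·(x'''' - (α_0/2)·x'') = 0 on [-r,r], and sup_{s∈[-r,r]}|x^{(k)}(s)| < ε for k = 0,1,2,3,4. (Bifurcation with respect to the foundation parameter β alone, with α and γ fixed.) -/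
/-!
Put `u = x''''` and let `G` invert `y ↦ y''` under the conditions `y' a = 0`, `y b = 0`. With
`p = -c m` and `q = α₀ + c m` one has `α₀ = p + q` and `β₀ = p q`, so for `β = β₀ + μ` the
equilibrium equation becomes `L u + μ G² u = N u` in `C([a, b])`, where `L = (1 + p G) (1 + q G)`
and `N` is cubic. The operator `1 + κ G` is invertible unless `κ` is one of the `-c k`, in which
case its kernel and a complement of its range are both spanned by a cosine. At a simple point the
range of `L` therefore misses only the mode `φ` in its kernel. After rescaling `u` to `t u` the
equation reads `L u + μ G² u = t² N u`; at `t = 0` it is solved by `(μ, u) = (0, φ)`, where its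
linearization `(μ, v) ↦ L v + μ G² φ` is onto because `G² φ` is a multiple of `φ`. The open mapping
form of the inverse function theorem then provides solutions near `(0, φ)` for all small `t`.
-/

open Real Set

namespace Rod

open Filter Topology

section Bifurcation

variable {𝕜 X Y : Type*} [NontriviallyNormedField 𝕜] [CompleteSpace 𝕜]
  [NormedAddCommGroup X] [NormedSpace 𝕜 X] [CompleteSpace X]
  [NormedAddCommGroup Y] [NormedSpace 𝕜 Y] [CompleteSpace Y]

theorem eventually_exists_add_smul_eq_smul {L M N' : X →L[𝕜] Y} {N : X → Y} {φ : X}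
    (hN : HasStrictFDerivAt N N' φ) (hφ : L φ = 0)
    (hsurj : ∀ y, ∃ (c : 𝕜) (v : X), L v + c • M φ = y)
    {U : Set (𝕜 × X)} (hU : U ∈ 𝓝 (0, φ)) :
    ∀ᶠ τ in 𝓝 (0 : 𝕜), ∃ p ∈ U, L p.2 + p.1 • M p.2 = τ • N p.2 := by
  let H : 𝕜 × 𝕜 × X → 𝕜 × Y := fun q => (q.1, L q.2.2 + q.2.1 • M q.2.2 - q.1 • N q.2.2)
  let H' : 𝕜 × 𝕜 × X →L[𝕜] 𝕜 × Y :=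
    (ContinuousLinearMap.fst 𝕜 𝕜 (𝕜 × X)).prod
      (L ∘L .snd 𝕜 𝕜 X ∘L .snd 𝕜 𝕜 (𝕜 × X)
        + (ContinuousLinearMap.fst 𝕜 𝕜 X ∘L .snd 𝕜 𝕜 (𝕜 × X)).smulRight (M φ)
        - (ContinuousLinearMap.fst 𝕜 𝕜 (𝕜 × X)).smulRight (N φ))
  have hH : HasStrictFDerivAt H H' (0, 0, φ) := by
    have hτ : HasStrictFDerivAt (fun q : 𝕜 × 𝕜 × X => q.1) (.fst 𝕜 𝕜 (𝕜 × X)) (0, 0, φ) :=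
      hasStrictFDerivAt_fst
    have hp : HasStrictFDerivAt (fun q : 𝕜 × 𝕜 × X => q.2) (.snd 𝕜 𝕜 (𝕜 × X)) (0, 0, φ) :=
      hasStrictFDerivAt_snd
    have hNu := HasStrictFDerivAt.comp (0, 0, φ) (f := fun q : 𝕜 × 𝕜 × X => q.2.2) hN hp.snd
    have hF := ((L.hasStrictFDerivAt.comp _ hp.snd).add
      (hp.fst.smul (M.hasStrictFDerivAt.comp _ hp.snd))).sub (hτ.smul hNu)
    refine (hτ.prodMk hF).congr_fderiv ?_
    ext q <;> simp [H']
  have hrange : H'.range = ⊤ := by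
    rw [LinearMap.range_eq_top]
    rintro ⟨τ, y⟩
    obtain ⟨c, v, hv⟩ := hsurj (y + τ • N φ)
    exact ⟨(τ, c, v), by simp [H', hv]⟩
  have himage : H '' {q | q.2 ∈ U} ∈ 𝓝 (0, 0) := by
    have hmap := hH.map_nhds_eq_of_surj hrange
    rw [show H (0, 0, φ) = (0, 0) by simp [H, hφ]] at hmap
    rw [← hmap]
    exact image_mem_map (continuous_snd.continuousAt.preimage_mem_nhds hU)
  have hslice : Tendsto (fun τ : 𝕜 => (τ, (0 : Y))) (𝓝 0) (𝓝 (0, 0)) :=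
    (Continuous.prodMk_left (0 : Y)).tendsto 0
  filter_upwards [hslice.eventually himage]
  rintro _ ⟨⟨τ, p⟩, hp, hq⟩
  obtain ⟨rfl, hzero⟩ := Prod.mk.inj hq
  exact ⟨p, hp, sub_eq_zero.1 hzero⟩

/-- Replacing `u` by `t • u` and cancelling `t` puts the small factor `t ^ d` in front of `N`. -/
theorem frequently_ne_zero_and_add_smul_eq_of_homogeneous {L M N' : X →L[𝕜] Y} {N : X → Y}
    {φ : X} {d : ℕ} (hd : d ≠ 0) (hhom : ∀ (t : 𝕜) (u : X), N (t • u) = t ^ (d + 1) • N u)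
    (hN : HasStrictFDerivAt N N' φ) (hφ₀ : φ ≠ 0) (hφ : L φ = 0)
    (hsurj : ∀ y, ∃ (c : 𝕜) (v : X), L v + c • M φ = y) :
    ∃ᶠ p in 𝓝 ((0 : 𝕜), (0 : X)), p.2 ≠ 0 ∧ L p.2 + p.1 • M p.2 = N p.2 := by
  refine frequently_iff.2 fun {U} hU => ?_
  have hscale : Tendsto (fun q : 𝕜 × 𝕜 × X => (q.2.1, q.1 • q.2.2)) (𝓝 (0, 0, φ)) (𝓝 (0, 0)) :=
    Continuous.tendsto' (by fun_prop) _ _ (by simp)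
  have hUscale := hscale.eventually hU
  rw [nhds_prod_eq] at hUscale
  obtain ⟨P, hP, Q, hQ, hPQ⟩ := eventually_prod_iff.1 hUscale
  have hne : ∀ᶠ p in 𝓝 ((0 : 𝕜), φ), p.2 ≠ 0 := continuous_snd.continuousAt.eventually_ne hφ₀
  have hpow : Tendsto (fun t : 𝕜 => t ^ d) (𝓝 0) (𝓝 0) :=
    (continuous_pow d).tendsto' 0 0 (zero_pow hd)
  have hev := (hpow.eventually (eventually_exists_add_smul_eq_smul hN hφ hsurj
    (hQ.and hne))).and hP
  obtain ⟨t, ⟨⟨⟨μ, u⟩, ⟨hμu, hu⟩, heq⟩, ht⟩, ht₀⟩ :=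
    ((eventually_nhdsWithin_of_eventually_nhds (s := {0}ᶜ) hev).and self_mem_nhdsWithin).exists
  refine ⟨(μ, t • u), hPQ ht hμu, smul_ne_zero ht₀ hu, ?_⟩
  calc L (t • u) + μ • M (t • u) = t • (L u + μ • M u) := by
        simp only [map_smul, smul_add, smul_comm μ t]
    _ = N (t • u) := by rw [heq, hhom, smul_smul, pow_succ']

end Bifurcation

section GeneralizedTrigonometry

/-- The solution of `y'' = -κ y` with `y 0 = 1` and `y' 0 = 0`, for `κ` of any sign. Since
`√x = 0` for `x ≤ 0`, at least one of the two factors is identically `1`. -/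
noncomputable def genCos (κ t : ℝ) : ℝ := cos (√κ * t) * cosh (√(-κ) * t)

/-- The solution of `y'' = -κ y` with `y 0 = 0` and `y' 0 = 1`, for `κ` of any sign. -/
noncomputable def genSin (κ t : ℝ) : ℝ := ∫ s in 0..t, genCos κ s

variable (κ : ℝ)

lemma continuous_genCos : Continuous (genCos κ) := by
  unfold genCos
  fun_prop

lemma genCos_zero : genCos κ 0 = 1 := by simp [genCos]

lemma genSin_zero : genSin κ 0 = 0 := by simp [genSin]

lemma hasDerivAt_genSin (t : ℝ) : HasDerivAt (genSin κ) (genCos κ t) t :=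
  ((continuous_genCos κ).integral_hasStrictDerivAt 0 t).hasDerivAt

lemma continuous_genSin : Continuous (genSin κ) :=
  continuous_iff_continuousAt.2 fun t => (hasDerivAt_genSin κ t).continuousAt

lemma hasDerivAt_genCos (t : ℝ) : HasDerivAt (genCos κ) (-κ * genSin κ t) t := by
  have hlin (ω : ℝ) : HasDerivAt (fun s => ω * s) ω t := by
    simpa using (hasDerivAt_id t).const_mul ω
  refine ((hlin √κ).cos.mul (hlin √(-κ)).cosh).congr_deriv ?_
  rcases le_total 0 κ with hκ | hκ
  · have hsin : √κ * genSin κ t = sin (√κ * t) := by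
      simp [genSin, genCos, sqrt_eq_zero_of_nonpos (neg_nonpos.2 hκ),
        intervalIntegral.mul_integral_comp_mul_left]
    simp only [sqrt_eq_zero_of_nonpos (neg_nonpos.2 hκ), zero_mul, cosh_zero, sinh_zero]
    linear_combination √κ * hsin - genSin κ t * sq_sqrt hκ
  · have integral_cosh (x : ℝ) : ∫ s in 0..x, cosh s = sinh x := by
      simp [intervalIntegral.integral_eq_sub_of_hasDerivAt (fun s _ => hasDerivAt_sinh s)
        (continuous_cosh.intervalIntegrable 0 x)]
    have hsinh : √(-κ) * genSin κ t = sinh (√(-κ) * t) := by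
      simp [genSin, genCos, sqrt_eq_zero_of_nonpos hκ,
        intervalIntegral.mul_integral_comp_mul_left, integral_cosh]
    simp only [sqrt_eq_zero_of_nonpos hκ, zero_mul, cos_zero, sin_zero]
    linear_combination (-√(-κ)) * hsinh + genSin κ t * sq_sqrt (neg_nonneg.2 hκ)

lemma genCos_sq_add_mul_genSin_sq (t : ℝ) : genCos κ t ^ 2 + κ * genSin κ t ^ 2 = 1 := by
  have hderiv (s : ℝ) : HasDerivAt (fun s => genCos κ s ^ 2 + κ * genSin κ s ^ 2) 0 s := by
    refine (((hasDerivAt_genCos κ s).pow 2).add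
      (((hasDerivAt_genSin κ s).pow 2).const_mul κ)).congr_deriv ?_
    ring
  have hconst := is_const_of_deriv_eq_zero (fun s => (hderiv s).differentiableAt)
    (fun s => (hderiv s).deriv) t 0
  simpa [genCos_zero, genSin_zero] using hconst

variable {κ}

lemma genCos_eq_zero_iff {t : ℝ} (ht : 0 < t) :
    genCos κ t = 0 ↔ ∃ k : ℕ, κ = (π / t * (k + 1 / 2)) ^ 2 := by
  rw [genCos, mul_eq_zero_iff_right (cosh_pos _).ne', cos_eq_zero_iff]
  constructor
  · rintro ⟨n, hn⟩
    have hn₀ : 0 ≤ n := by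
      by_contra! hneg
      have hn_le : (n : ℝ) + 1 ≤ 0 := by exact_mod_cast hneg
      have harg : 0 ≤ √κ * t := by positivity
      nlinarith [pi_pos]
    lift n to ℕ using hn₀
    have hsqrt : √κ = π / t * (n + 1 / 2) := by
      field_simp
      push_cast at hn
      linarith
    have hκ : 0 < κ := sqrt_pos.1 (by rw [hsqrt]; positivity)
    exact ⟨n, by rw [← hsqrt, sq_sqrt hκ.le]⟩
  · rintro ⟨k, rfl⟩
    refine ⟨k, ?_⟩
    rw [sqrt_sq (by positivity)]
    push_cast
    field_simp

lemma genCos_sub_neg_eq_zero_iff {r : ℝ} (hr : 0 < r) :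
    genCos κ (r - -r) = 0 ↔ ∃ k : ℕ, 1 ≤ k ∧ κ = (π / r) ^ 2 * ((2 * (k : ℝ) - 1) / 4) ^ 2 := by
  have hfreq (k : ℕ) : (π / (r - -r) * (k + 1 / 2)) ^ 2
      = (π / r) ^ 2 * ((2 * ((k + 1 : ℕ) : ℝ) - 1) / 4) ^ 2 := by
    rw [sub_neg_eq_add, ← two_mul]
    push_cast
    field_simp
    ring
  rw [genCos_eq_zero_iff (by linarith)]
  constructor
  · rintro ⟨k, rfl⟩
    exact ⟨k + 1, by simp, hfreq k⟩
  · rintro ⟨k, hk, rfl⟩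
    obtain ⟨k, rfl⟩ := Nat.exists_eq_add_of_le' hk
    exact ⟨k, (hfreq k).symm⟩

lemma exists_hasDerivAt_forced (κ a : ℝ) {g : ℝ → ℝ} (hg : Continuous g) :
    ∃ y y' : ℝ → ℝ, (∀ s, HasDerivAt y (y' s) s) ∧
      (∀ s, HasDerivAt y' (g s - κ * y s) s) ∧ y' a = 0 := by
  have hC (s : ℝ) :
      HasDerivAt (fun s => ∫ t in a..s, genCos κ t * g t) (genCos κ s * g s) s :=
    (((continuous_genCos κ).mul hg).integral_hasStrictDerivAt a s).hasDerivAt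
  have hS (s : ℝ) :
      HasDerivAt (fun s => ∫ t in a..s, genSin κ t * g t) (genSin κ s * g s) s :=
    (((continuous_genSin κ).mul hg).integral_hasStrictDerivAt a s).hasDerivAt
  -- `∫ t in a..s, genSin κ (s - t) * g t`, expanded by the addition formula
  refine ⟨fun s => genSin κ s * (∫ t in a..s, genCos κ t * g t)
      - genCos κ s * ∫ t in a..s, genSin κ t * g t,
    fun s => genCos κ s * (∫ t in a..s, genCos κ t * g t)
      + κ * genSin κ s * ∫ t in a..s, genSin κ t * g t, fun s => ?_, fun s => ?_, by simp⟩
  · refine (((hasDerivAt_genSin κ s).mul (hC s)).sub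
      ((hasDerivAt_genCos κ s).mul (hS s))).congr_deriv ?_
    ring
  · refine (((hasDerivAt_genCos κ s).mul (hC s)).add
      (((hasDerivAt_genSin κ s).const_mul κ).mul (hS s))).congr_deriv ?_
    linear_combination g s * genCos_sq_add_mul_genSin_sq κ s

end GeneralizedTrigonometry

section Primitives

variable {E : Type*} [NormedAddCommGroup E] [NormedSpace ℝ E] {a b : ℝ}

/-- The primitive vanishing at `c`, as an operator on `C([a, b], E)`. -/
noncomputable def integralFrom (c : Icc a b) : C(Icc a b, E) →L[ℝ] C(Icc a b, E) :=
  have hab : a ≤ b := c.2.1.trans c.2.2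
  have hint (f : C(Icc a b, E)) (s t : ℝ) :
      IntervalIntegrable (IccExtend hab f) MeasureTheory.volume s t :=
    f.continuous.Icc_extend'.intervalIntegrable s t
  LinearMap.mkContinuous
    { toFun f := ⟨fun s => ∫ t in (c : ℝ)..s, IccExtend hab f t,
        (intervalIntegral.continuous_primitive (hint f) c).comp continuous_subtype_val⟩
      map_add' f g := ContinuousMap.ext fun s =>
        intervalIntegral.integral_add (hint f c s) (hint g c s)
      map_smul' k f := ContinuousMap.ext fun s =>
        intervalIntegral.integral_smul k (IccExtend hab f) }
    (b - a) fun f => by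
      rw [ContinuousMap.norm_le _ (mul_nonneg (sub_nonneg.2 hab) (norm_nonneg f))]
      intro s
      have hlen : |(s : ℝ) - c| ≤ b - a :=
        abs_sub_le_of_le_of_le s.2.1 s.2.2 c.2.1 c.2.2
      calc ‖∫ t in (c : ℝ)..s, IccExtend hab f t‖ ≤ ‖f‖ * |(s : ℝ) - c| :=
            intervalIntegral.norm_integral_le_of_norm_le_const fun t _ => f.norm_coe_le_norm _
        _ ≤ (b - a) * ‖f‖ := by rw [mul_comm]; gcongr

lemma integralFrom_self (c : Icc a b) (f : C(Icc a b, E)) : integralFrom c f c = 0 :=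
  intervalIntegral.integral_same

lemma integralFrom_apply_of_hasDerivAt [CompleteSpace E] (c : Icc a b) {f : C(Icc a b, E)}
    {y : ℝ → E} (hy : ∀ s : Icc a b, HasDerivAt y (f s) s) (s : Icc a b) :
    integralFrom c f s = y s - y c := by
  have hab : a ≤ b := c.2.1.trans c.2.2
  refine intervalIntegral.integral_eq_sub_of_hasDerivAt (fun t ht => ?_)
    (f.continuous.Icc_extend'.intervalIntegrable _ _)
  have htI : t ∈ Icc a b := uIcc_subset_Icc c.2 s.2 ht
  rw [IccExtend_of_mem hab f htI]
  exact hy ⟨t, htI⟩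

/-- The solution operator of `x⁽ⁿ⁾ = f` on `[a, b]` under the alternating conditions
`x⁽ⁿ⁻¹⁾ a = 0`, `x⁽ⁿ⁻²⁾ b = 0`, `x⁽ⁿ⁻³⁾ a = 0`, … -/
noncomputable def alternatingPrimitive (hab : a ≤ b) : ℕ → C(Icc a b, E) →L[ℝ] C(Icc a b, E)
  | 0 => .id ℝ _
  | n + 1 => integralFrom (if Even n then ⟨a, left_mem_Icc.2 hab⟩ else ⟨b, right_mem_Icc.2 hab⟩)
      ∘L alternatingPrimitive hab n

variable (hab : a ≤ b)

lemma alternatingPrimitive_left {n : ℕ} (hn : Odd n) (f : C(Icc a b, E)) :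
    alternatingPrimitive hab n f ⟨a, left_mem_Icc.2 hab⟩ = 0 := by
  obtain ⟨k, rfl⟩ := hn
  simp [alternatingPrimitive, integralFrom_self]

lemma alternatingPrimitive_right {n : ℕ} (hn : Even n) (hn₀ : n ≠ 0) (f : C(Icc a b, E)) :
    alternatingPrimitive hab n f ⟨b, right_mem_Icc.2 hab⟩ = 0 := by
  obtain ⟨k, rfl⟩ := Nat.exists_eq_succ_of_ne_zero hn₀
  simp [alternatingPrimitive, Nat.even_add_one.1 hn, integralFrom_self]

lemma alternatingPrimitive_two_apply_of_hasDerivAt [CompleteSpace E] {f : C(Icc a b, E)}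
    {y y' : ℝ → E} (hy : ∀ s : Icc a b, HasDerivAt y (y' s) s)
    (hy' : ∀ s : Icc a b, HasDerivAt y' (f s) s) (ha : y' a = 0) (hb : y b = 0) (s : Icc a b) :
    alternatingPrimitive hab 2 f s = y s := by
  have hfirst (s : Icc a b) : integralFrom ⟨a, left_mem_Icc.2 hab⟩ f s = y' s := by
    rw [integralFrom_apply_of_hasDerivAt _ hy', ha, sub_zero]
  have hsecond := integralFrom_apply_of_hasDerivAt ⟨b, right_mem_Icc.2 hab⟩
    (f := integralFrom ⟨a, left_mem_Icc.2 hab⟩ f) (fun s => hfirst s ▸ hy s) s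
  simpa [alternatingPrimitive, hb] using hsecond

lemma exists_contDiff_iteratedDeriv_eq_alternatingPrimitive [CompleteSpace E] (n : ℕ)
    (f : C(Icc a b, E)) :
    ∃ x : ℝ → E, ContDiff ℝ n x ∧ ∀ k ≤ n, ∀ s : Icc a b,
      iteratedDeriv k x s = alternatingPrimitive hab (n - k) f s := by
  induction n with
  | zero =>
    refine ⟨IccExtend hab f, contDiff_zero.2 f.continuous.Icc_extend', fun k hk s => ?_⟩
    obtain rfl := Nat.le_zero.1 hk
    simp [alternatingPrimitive]
  | succ n ih =>
    obtain ⟨x, hx, hxf⟩ := ih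
    let c : Icc a b := if Even n then ⟨a, left_mem_Icc.2 hab⟩ else ⟨b, right_mem_Icc.2 hab⟩
    have hderiv (s : ℝ) : HasDerivAt (fun s => ∫ t in (c : ℝ)..s, x t) (x s) s :=
      (hx.continuous.integral_hasStrictDerivAt c s).hasDerivAt
    have hderiv_eq : deriv (fun s => ∫ t in (c : ℝ)..s, x t) = x :=
      funext fun s => (hderiv s).deriv
    refine ⟨fun s => ∫ t in (c : ℝ)..s, x t, ?_, fun k hk s => ?_⟩
    · push_cast
      rw [contDiff_succ_iff_deriv, hderiv_eq]
      exact ⟨fun s => (hderiv s).differentiableAt, by simp, hx⟩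
    · cases k with
      | zero =>
        have hxn (s : Icc a b) : x s = alternatingPrimitive hab n f s := by
          simpa using hxf 0 n.zero_le s
        have hprim := integralFrom_apply_of_hasDerivAt c (fun s => hxn s ▸ hderiv s) s
        simpa [alternatingPrimitive, c] using hprim.symm
      | succ k =>
        rw [iteratedDeriv_succ', hderiv_eq, Nat.add_sub_add_right]
        exact hxf k (by lia) s

lemma eqOn_iteratedDeriv_zero_of_eqOn_Icc {n : ℕ} {x : ℝ → E} (hab : a < b)
    (hx : ContDiff ℝ n x) (h : EqOn x 0 (Icc a b)) : EqOn (iteratedDeriv n x) 0 (Icc a b) := by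
  intro s hs
  rw [← iteratedDerivWithin_eq_iteratedDeriv (uniqueDiffOn_Icc hab) hx.contDiffAt hs,
    iteratedDerivWithin_congr h hs]
  simp

end Primitives

section Helmholtz

variable {a b : ℝ} (hab : a ≤ b)

/-- The operator `y'' ↦ y'' + κ y` on `C([a, b])`, where `y` is subject to `y' a = 0` and
`y b = 0`. -/
noncomputable def helmholtz (κ : ℝ) : C(Icc a b, ℝ) →L[ℝ] C(Icc a b, ℝ) :=
  .id ℝ _ + κ • alternatingPrimitive hab 2

lemma helmholtz_apply (κ : ℝ) (v : C(Icc a b, ℝ)) :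
    helmholtz hab κ v = v + κ • alternatingPrimitive hab 2 v := rfl

lemma helmholtz_comp_apply (p q : ℝ) (v : C(Icc a b, ℝ)) :
    (helmholtz hab p ∘L helmholtz hab q) v =
      v + (p + q) • alternatingPrimitive hab 2 v + (p * q) • alternatingPrimitive hab 4 v := by
  have hfour : alternatingPrimitive hab 4 v =
      alternatingPrimitive hab 2 (alternatingPrimitive hab 2 v) := by
    simp [alternatingPrimitive, Nat.even_add_one]
  simp only [ContinuousLinearMap.comp_apply, helmholtz_apply, map_add, map_smul, hfour]
  module

lemma helmholtz_comp_comm (p q : ℝ) :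
    helmholtz hab p ∘L helmholtz hab q = helmholtz hab q ∘L helmholtz hab p := by
  ext1 v
  rw [helmholtz_comp_apply, helmholtz_comp_apply, add_comm p, mul_comm p]

lemma exists_helmholtz_eq_of_hasDerivAt {κ : ℝ} {f : C(Icc a b, ℝ)} {y y' : ℝ → ℝ}
    (hy : ∀ s : Icc a b, HasDerivAt y (y' s) s)
    (hy' : ∀ s : Icc a b, HasDerivAt y' (f s - κ * y s) s) (ha : y' a = 0) (hb : y b = 0) :
    ∃ v, helmholtz hab κ v = f := by
  have hycont : Continuous fun s : Icc a b => y s := continuous_iff_continuousAt.2 fun s =>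
    (hy s).continuousAt.comp continuous_subtype_val.continuousAt
  let v : C(Icc a b, ℝ) := ⟨fun s => f s - κ * y s, f.continuous.sub (hycont.const_mul κ)⟩
  refine ⟨v, ContinuousMap.ext fun s => ?_⟩
  have hGv : alternatingPrimitive hab 2 v s = y s :=
    alternatingPrimitive_two_apply_of_hasDerivAt hab hy hy' ha hb s
  simp [helmholtz_apply, hGv, v]

/-- The solution of `y'' + κ y = 0` on `[a, b]` with `y a = 1` and `y' a = 0`. -/
noncomputable def cosMode (a b κ : ℝ) : C(Icc a b, ℝ) :=
  ⟨fun s => genCos κ (s - a), by have := continuous_genCos κ; fun_prop⟩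

lemma cosMode_apply (κ : ℝ) (s : Icc a b) : cosMode a b κ s = genCos κ (s - a) := rfl

lemma cosMode_ne_zero (hab : a ≤ b) (κ : ℝ) : cosMode a b κ ≠ 0 := fun h => by
  simpa [cosMode_apply, genCos_zero] using DFunLike.congr_fun h ⟨a, left_mem_Icc.2 hab⟩

lemma hasDerivAt_genCos_sub (κ a s : ℝ) :
    HasDerivAt (fun s => genCos κ (s - a)) (-κ * genSin κ (s - a)) s :=
  (hasDerivAt_genCos κ (s - a)).comp_sub_const s a

lemma hasDerivAt_genSin_sub (κ a s : ℝ) :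
    HasDerivAt (fun s => genSin κ (s - a)) (genCos κ (s - a)) s :=
  (hasDerivAt_genSin κ (s - a)).comp_sub_const s a

lemma helmholtz_cosMode {κ : ℝ} (hκ : genCos κ (b - a) = 0) :
    helmholtz hab κ (cosMode a b κ) = 0 := by
  ext s
  have hG := alternatingPrimitive_two_apply_of_hasDerivAt hab (f := (-κ) • cosMode a b κ)
    (fun s => hasDerivAt_genCos_sub κ a s)
    (fun s => (hasDerivAt_genSin_sub κ a s).const_mul (-κ)) (by simp [genSin_zero]) hκ s
  rw [map_smul, ContinuousMap.smul_apply, smul_eq_mul] at hG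
  simp only [helmholtz_apply, ContinuousMap.add_apply, ContinuousMap.smul_apply, smul_eq_mul,
    cosMode_apply, ContinuousMap.zero_apply]
  linarith

lemma helmholtz_surjective {κ : ℝ} (hκ : genCos κ (b - a) ≠ 0) :
    Function.Surjective (helmholtz hab κ) := by
  intro f
  obtain ⟨y, y', hy, hy', ha⟩ := exists_hasDerivAt_forced κ a (f.continuous.Icc_extend' (h := hab))
  let c := y b / genCos κ (b - a)
  refine exists_helmholtz_eq_of_hasDerivAt hab
    (y := fun s => y s - c * genCos κ (s - a)) (y' := fun s => y' s - c * (-κ * genSin κ (s - a)))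
    (fun s => (hy s).sub ((hasDerivAt_genCos_sub κ a s).const_mul c))
    (fun s => ?_) (by simp [ha, genSin_zero]) (by simp [c, hκ])
  refine ((hy' s).sub (((hasDerivAt_genSin_sub κ a s).const_mul (-κ)).const_mul c)).congr_deriv ?_
  rw [IccExtend_val]
  ring

/-- At resonance the defect is corrected by `(s - a) * genSin κ (s - a) / 2`, whose image under
`y ↦ y'' + κ y` is the resonant mode. -/
lemma exists_helmholtz_add_smul_cosMode_eq (hab : a < b) {κ : ℝ} (hκ : genCos κ (b - a) = 0)
    (f : C(Icc a b, ℝ)) : ∃ (c : ℝ) (v : C(Icc a b, ℝ)),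
      helmholtz hab.le κ v + c • cosMode a b κ = f := by
  have hsin : genSin κ (b - a) ≠ 0 := fun h => by
    simpa [h, hκ] using genCos_sq_add_mul_genSin_sq κ (b - a)
  have hlen : b - a ≠ 0 := (sub_pos.2 hab).ne'
  obtain ⟨y, y', hy, hy', ha⟩ :=
    exists_hasDerivAt_forced κ a (f.continuous.Icc_extend' (h := hab.le))
  let c := y b / ((b - a) * genSin κ (b - a) / 2)
  have hlin (s : ℝ) : HasDerivAt (fun s => s - a) 1 s := (hasDerivAt_id s).sub_const a
  obtain ⟨v, hv⟩ : ∃ v, helmholtz hab.le κ v = f - c • cosMode a b κ := by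
    refine exists_helmholtz_eq_of_hasDerivAt hab.le
      (y := fun s => y s - c * ((s - a) * genSin κ (s - a) / 2))
      (y' := fun s => y' s - c * ((genSin κ (s - a) + (s - a) * genCos κ (s - a)) / 2))
      (fun s => ?_) (fun s => ?_) (by simp [ha, genSin_zero]) (by simp [c, hsin, hlen])
    · refine ((hy s).sub ((((hlin s).mul (hasDerivAt_genSin_sub κ a s)).div_const
        2).const_mul c)).congr_deriv ?_
      ring
    · refine ((hy' s).sub ((((hasDerivAt_genSin_sub κ a s).add
        ((hlin s).mul (hasDerivAt_genCos_sub κ a s))).div_const 2).const_mul c)).congr_deriv ?_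
      rw [IccExtend_val, ContinuousMap.sub_apply, ContinuousMap.smul_apply, smul_eq_mul,
        cosMode_apply]
      ring
  exact ⟨c, v, by rw [hv, sub_add_cancel]⟩

/-- The double root `q = p` is allowed: `helmholtz p` kills the mode, so applying the resonant
solvability twice still leaves a defect of dimension one. -/
lemma exists_helmholtz_comp_add_smul_eq (hab : a < b) {p q : ℝ} (hp : genCos p (b - a) = 0)
    (hq : genCos q (b - a) = 0 → q = p) (f : C(Icc a b, ℝ)) :
    ∃ (c : ℝ) (v : C(Icc a b, ℝ)),
      (helmholtz hab.le p ∘L helmholtz hab.le q) v + c • cosMode a b p = f := by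
  obtain ⟨c, w, rfl⟩ := exists_helmholtz_add_smul_cosMode_eq hab hp f
  suffices ∃ v, helmholtz hab.le p (helmholtz hab.le q v) = helmholtz hab.le p w by
    obtain ⟨v, hv⟩ := this
    exact ⟨c, v, by rw [ContinuousLinearMap.comp_apply, hv]⟩
  by_cases hres : genCos q (b - a) = 0
  · obtain rfl := hq hres
    obtain ⟨d, v, rfl⟩ := exists_helmholtz_add_smul_cosMode_eq hab hp w
    exact ⟨v, by rw [map_add, map_smul, helmholtz_cosMode _ hp, smul_zero, add_zero]⟩
  · obtain ⟨v, rfl⟩ := helmholtz_surjective hab.le hres w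
    exact ⟨v, rfl⟩

end Helmholtz

section Equilibria

variable {a b : ℝ} (hab : a ≤ b)

/-- The nonlinear part of the equilibrium equation, as a function of `u = x''''`; then
`alternatingPrimitive hab (4 - k) u` is the `k`-th derivative of `x`. -/
noncomputable def rodNonlinearity (α γ : ℝ) (u : C(Icc a b, ℝ)) : C(Icc a b, ℝ) :=
  γ • alternatingPrimitive hab 4 u ^ 3 + (3 : ℝ) • alternatingPrimitive hab 2 u ^ 3
    + (12 : ℝ) • (alternatingPrimitive hab 3 u * alternatingPrimitive hab 2 u
        * alternatingPrimitive hab 1 u)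
    + (3 : ℝ) • (alternatingPrimitive hab 3 u ^ 2
        * (u - (α / 2) • alternatingPrimitive hab 2 u))

lemma contDiff_rodNonlinearity (α γ : ℝ) : ContDiff ℝ 1 (rodNonlinearity hab α γ) := by
  unfold rodNonlinearity
  fun_prop

lemma rodNonlinearity_smul (α γ t : ℝ) (u : C(Icc a b, ℝ)) :
    rodNonlinearity hab α γ (t • u) = t ^ 3 • rodNonlinearity hab α γ u := by
  ext s
  simp only [rodNonlinearity, map_smul, ContinuousMap.add_apply, ContinuousMap.smul_apply,
    ContinuousMap.mul_apply, ContinuousMap.pow_apply, ContinuousMap.sub_apply, smul_eq_mul]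
  ring

theorem frequently_ne_zero_and_rod_equation (hab : a < b) (γ : ℝ) {p q : ℝ}
    (hp : genCos p (b - a) = 0) (hq : genCos q (b - a) = 0 → q = p) :
    ∃ᶠ w in 𝓝 ((0 : ℝ), (0 : C(Icc a b, ℝ))), w.2 ≠ 0 ∧
      w.2 + (p + q) • alternatingPrimitive hab.le 2 w.2
        + (p * q + w.1) • alternatingPrimitive hab.le 4 w.2
        = rodNonlinearity hab.le (p + q) γ w.2 := by
  have hker : helmholtz hab.le p (cosMode a b p) = 0 := helmholtz_cosMode hab.le hp
  have hlinear : (helmholtz hab.le p ∘L helmholtz hab.le q) (cosMode a b p) = 0 := by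
    rw [helmholtz_comp_comm, ContinuousLinearMap.comp_apply, hker, map_zero]
  have hmode : p ^ 2 • alternatingPrimitive hab.le 4 (cosMode a b p) = cosMode a b p := by
    have hsq := helmholtz_comp_apply hab.le p p (cosMode a b p)
    rw [ContinuousLinearMap.comp_apply, hker, map_zero] at hsq
    rw [helmholtz_apply] at hker
    linear_combination (norm := module) (-2 : ℝ) • hker - hsq
  have hsurj (f : C(Icc a b, ℝ)) : ∃ (c : ℝ) (v : C(Icc a b, ℝ)),
      (helmholtz hab.le p ∘L helmholtz hab.le q) v
        + c • alternatingPrimitive hab.le 4 (cosMode a b p) = f := by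
    obtain ⟨c, v, hv⟩ := exists_helmholtz_comp_add_smul_eq hab hp hq f
    exact ⟨c * p ^ 2, v, by rw [mul_smul, hmode, hv]⟩
  have hstrict := (contDiff_rodNonlinearity hab.le (p + q) γ).contDiffAt.hasStrictFDerivAt
    (x := cosMode a b p) one_ne_zero
  refine (frequently_ne_zero_and_add_smul_eq_of_homogeneous two_ne_zero
    (rodNonlinearity_smul hab.le (p + q) γ) hstrict (cosMode_ne_zero hab.le p) hlinear hsurj).mono
    fun w hw => ⟨hw.1, ?_⟩
  rw [← hw.2, helmholtz_comp_apply, add_smul (p * q), ← add_assoc]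

/-- `x` is an equilibrium of the rod on `[a, b]`: it is `C⁴`, satisfies the boundary conditions
`x' a = x''' a = 0`, `x b = x'' b = 0`, and solves the equilibrium equation with compressive force
`α`, foundation stiffness `β` and foundation nonlinearity `γ`. -/
structure IsRodEquilibrium (a b α β γ : ℝ) (x : ℝ → ℝ) : Prop where
  contDiff : ContDiff ℝ 4 x
  deriv_one_left : iteratedDeriv 1 x a = 0
  deriv_three_left : iteratedDeriv 3 x a = 0
  apply_right : x b = 0
  deriv_two_right : iteratedDeriv 2 x b = 0
  equation : ∀ s ∈ Icc a b,
    iteratedDeriv 4 x s + α * iteratedDeriv 2 x s + β * x s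
      - γ * (x s) ^ 3 - 3 * (iteratedDeriv 2 x s) ^ 3
      - 12 * iteratedDeriv 1 x s * iteratedDeriv 2 x s * iteratedDeriv 3 x s
      - 3 * (iteratedDeriv 1 x s) ^ 2 *
          (iteratedDeriv 4 x s - (α / 2) * iteratedDeriv 2 x s) = 0

lemma exists_isRodEquilibrium_iteratedDeriv_eq {α β γ : ℝ} {u : C(Icc a b, ℝ)}
    (hu : u + α • alternatingPrimitive hab 2 u + β • alternatingPrimitive hab 4 u
      = rodNonlinearity hab α γ u) :
    ∃ x : ℝ → ℝ, IsRodEquilibrium a b α β γ x ∧ ∀ k ≤ 4, ∀ s : Icc a b,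
      iteratedDeriv k x s = alternatingPrimitive hab (4 - k) u s := by
  obtain ⟨x, hx, hxu⟩ := exists_contDiff_iteratedDeriv_eq_alternatingPrimitive hab 4 u
  have hx₀ (s : Icc a b) : x s = alternatingPrimitive hab 4 u s := by
    simpa using hxu 0 (by simp) s
  have hx₁ := hxu 1 (by simp)
  have hx₂ := hxu 2 (by simp)
  have hx₃ := hxu 3 (by simp)
  have hx₄ (s : Icc a b) : iteratedDeriv 4 x s = u s := hxu 4 le_rfl s
  refine ⟨x, ⟨hx, ?_, ?_, ?_, ?_, fun s hs => ?_⟩, hxu⟩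
  · exact (hx₁ _).trans (alternatingPrimitive_left hab (by decide) u)
  · exact (hx₃ _).trans (alternatingPrimitive_left hab (by decide) u)
  · exact (hx₀ _).trans (alternatingPrimitive_right hab (by decide) four_ne_zero u)
  · exact (hx₂ _).trans (alternatingPrimitive_right hab (by decide) two_ne_zero u)
  · lift s to Icc a b using hs
    rw [hx₀, hx₁, hx₂, hx₃, hx₄]
    have hu_s := DFunLike.congr_fun hu s
    simp only [rodNonlinearity, ContinuousMap.add_apply, ContinuousMap.smul_apply,
      ContinuousMap.mul_apply, ContinuousMap.pow_apply, ContinuousMap.sub_apply,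
      smul_eq_mul] at hu_s
    linear_combination hu_s

theorem exists_small_isRodEquilibrium (hab : a < b) (γ : ℝ) {p q : ℝ}
    (hp : genCos p (b - a) = 0) (hq : genCos q (b - a) = 0 → q = p) {U : Set ℝ}
    (hU : U ∈ 𝓝 (p * q)) {ε : ℝ} (hε : 0 < ε) :
    ∃ β ∈ U, ∃ x : ℝ → ℝ, IsRodEquilibrium a b (p + q) β γ x ∧ (∃ s ∈ Icc a b, x s ≠ 0) ∧
      ∀ k ≤ 4, ∀ s ∈ Icc a b, |iteratedDeriv k x s| < ε := by
  have hβ : ∀ᶠ w in 𝓝 ((0 : ℝ), (0 : C(Icc a b, ℝ))), p * q + w.1 ∈ U :=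
    (Continuous.tendsto' (by fun_prop) _ _ (by simp)).eventually hU
  have hsmall : ∀ᶠ w in 𝓝 ((0 : ℝ), (0 : C(Icc a b, ℝ))), ∀ k ∈ Iic 4,
      ‖alternatingPrimitive hab.le (4 - k) w.2‖ < ε :=
    (eventually_all_finite (finite_Iic 4)).2 fun k _ =>
      (Continuous.tendsto' (by fun_prop) _ 0 (by simp)).eventually_lt_const hε
  obtain ⟨⟨μ, u⟩, ⟨hu, heq⟩, hμU, hu_small⟩ :=
    ((frequently_ne_zero_and_rod_equation hab γ hp hq).and_eventually (hβ.and hsmall)).exists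
  obtain ⟨x, hx, hxu⟩ := exists_isRodEquilibrium_iteratedDeriv_eq hab.le heq
  refine ⟨p * q + μ, hμU, x, hx, ?_, fun k hk s hs => ?_⟩
  · by_contra! hzero
    refine hu (ContinuousMap.ext fun s => ?_)
    have hfour : iteratedDeriv 4 x s = u s := hxu 4 le_rfl s
    rw [← hfour]
    exact eqOn_iteratedDeriv_zero_of_eqOn_Icc hab hx.contDiff hzero s.2
  · rw [hxu k hk ⟨s, hs⟩]
    exact (ContinuousMap.norm_coe_le_norm (alternatingPrimitive hab.le (4 - k) u)
      ⟨s, hs⟩).trans_lt (hu_small k hk)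

end Equilibria

end Rod

open Filter Topology in
theorem stmt_16_general (r : ℝ) (hr : 0 < r) (c : ℕ → ℝ)
    (hc : ∀ k : ℕ, c k = -(π / r) ^ 2 * ((2 * (k : ℝ) - 1) / 4) ^ 2)
    (m : ℕ) (hm : 1 ≤ m) (α₀ β₀ γ₀ : ℝ) (hray : β₀ = -(c m) * α₀ - (c m) ^ 2)
    (hsimple : ∀ k : ℕ, 1 ≤ k → k ≠ m → β₀ ≠ -(c k) * α₀ - (c k) ^ 2) :
    ∀ U ∈ 𝓝 β₀, ∀ ε > 0, ∃ β ∈ U, ∃ x : ℝ → ℝ,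
      Rod.IsRodEquilibrium (-r) r α₀ β γ₀ x ∧ (∃ s ∈ Icc (-r) r, x s ≠ 0) ∧
      ∀ k ≤ 4, ∀ s ∈ Icc (-r) r, |iteratedDeriv k x s| < ε := by
  intro U hU ε hε
  obtain ⟨p, hp⟩ : ∃ p, p = -c m := ⟨_, rfl⟩
  obtain ⟨q, hq⟩ : ∃ q, q = α₀ + c m := ⟨_, rfl⟩
  obtain rfl : α₀ = p + q := by linarith
  obtain rfl : β₀ = p * q := by rw [hray, hq, hp]; ring
  have hroot (κ : ℝ) : Rod.genCos κ (r - -r) = 0 ↔ ∃ k : ℕ, 1 ≤ k ∧ κ = -c k := by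
    simp only [Rod.genCos_sub_neg_eq_zero_iff hr, hc, neg_mul, neg_neg]
  have hq_simple : Rod.genCos q (r - -r) = 0 → q = p := fun hzero => by
    obtain ⟨k, hk, hqk⟩ := (hroot q).1 hzero
    by_cases hkm : k = m
    · rw [hqk, hkm, hp]
    · exact absurd (by rw [← neg_sq, ← hqk]; ring) (hsimple k hk hkm)
  exact Rod.exists_small_isRodEquilibrium (by linarith) γ₀ ((hroot p).2 ⟨m, hm, hp⟩) hq_simple
    hU hε

/-- At a simple point, bifurcation occurs with respect to the foundation
parameter `β` alone, with `α` and `γ` fixed. -/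
theorem stmt_16 (r : ℝ) (hr : 0 < r)
    (c : ℕ → ℝ)
    (hc : ∀ k : ℕ, c k = -(π / r) ^ 2 * ((2 * (k : ℝ) - 1) / 4) ^ 2)
    (m : ℕ) (hm : 1 ≤ m)
    (α₀ β₀ γ₀ : ℝ) (hα₀ : 0 < α₀) (hβ₀ : 0 < β₀) (hγ₀ : 0 < γ₀)
    (hray : β₀ = -(c m) * α₀ - (c m) ^ 2)
    (hsimple : ∀ k : ℕ, 1 ≤ k → k ≠ m → β₀ ≠ -(c k) * α₀ - (c k) ^ 2) :
    ∀ ε > 0, ∃ β : ℝ, ∃ x : ℝ → ℝ,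
      0 < β ∧ |β - β₀| < ε ∧
      ContDiff ℝ 4 x ∧
      (∃ s ∈ Icc (-r) r, x s ≠ 0) ∧
      iteratedDeriv 1 x (-r) = 0 ∧ iteratedDeriv 3 x (-r) = 0 ∧
      x r = 0 ∧ iteratedDeriv 2 x r = 0 ∧
      (∀ s ∈ Icc (-r) r,
        iteratedDeriv 4 x s + α₀ * iteratedDeriv 2 x s + β * x s
          - γ₀ * (x s) ^ 3 - 3 * (iteratedDeriv 2 x s) ^ 3
          - 12 * iteratedDeriv 1 x s * iteratedDeriv 2 x s * iteratedDeriv 3 x s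
          - 3 * (iteratedDeriv 1 x s) ^ 2 *
              (iteratedDeriv 4 x s - (α₀ / 2) * iteratedDeriv 2 x s) = 0) ∧
      (∀ k : ℕ, k ≤ 4 → ∀ s ∈ Icc (-r) r, |iteratedDeriv k x s| < ε) := by
  intro ε hε
  obtain ⟨β, ⟨hβ, hβε⟩, x, hx, hne, hsmall⟩ :=
    stmt_16_general r hr c hc m hm α₀ β₀ γ₀ hray hsimple _
      (Filter.inter_mem (Ioi_mem_nhds hβ₀) (Metric.ball_mem_nhds β₀ hε)) ε hε
  exact ⟨β, x, hβ, hβε, hx.contDiff, hne, hx.deriv_one_left, hx.deriv_three_left,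
    hx.apply_right, hx.deriv_two_right, hx.equation, hsmall⟩
end
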